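/- The expected cost of the adaptive greedy policy equals the total expected revenue it collects from the markers: E[C(σ)] = Σ_{i=1}^{|N(σ)|} E[λ_i]. -/

import Mathlib

/-!
Common framework for the Stochastic Submodular Cover problem
(Hellerstein–Kletenik–Parthasarathy, "A Tight Bound for Stochastic Submodular Cover").
-/

namespace SSC

open Finset
open scoped Classical

noncomputable section

variable {E O : Type*}

/-- A subrealization assigns to each item either a state or `none` (unassigned).
A realization corresponds to the case where every item is assigned. -/
abbrev Sub (E O : Type*) := E → Option O

/-- `subext ψ ψ'` means `ψ ⊆ ψ'` as partial assignments of states to items. -/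
def subext (ψ ψ' : Sub E O) : Prop := ∀ e o, ψ e = some o → ψ' e = some o

/-- `ssubext ψ ψ'` means `ψ ⊂ ψ'` (strict extension). -/
def ssubext (ψ ψ' : Sub E O) : Prop := subext ψ ψ' ∧ ψ ≠ ψ'

/-- Extend a subrealization `ψ` by assigning state `o` to item `e`. -/
def updateSub [DecidableEq E] (ψ : Sub E O) (e : E) (o : O) : Sub E O :=
  fun e' => if e' = e then some o else ψ e'

/-- View a (full) realization as a subrealization. -/
def toSub (φ : E → O) : Sub E O := fun e => some (φ e)

variable [Fintype E] [DecidableEq E] [Fintype O] [DecidableEq O]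

/-- An instance of the Stochastic Submodular Cover problem: positive item costs `c`,
a probability mass function `p` on realizations with mutually independent item states,
and a utility function `f` on subrealizations which is zero on the empty subrealization,
nonnegative, monotone and submodular (pointwise polymatroid), and equal to the goal
value `Q > 0` on every full realization (coverability). -/
structure Problem (E O : Type*) [Fintype E] [DecidableEq E] [Fintype O] [DecidableEq O] where
  c : E → ℝ
  c_pos : ∀ e, 0 < c e
  p : (E → O) → ℝ
  p_nonneg : ∀ φ, 0 ≤ p φ
  p_sum : ∑ φ : E → O, p φ = 1
  indep : ∀ φ : E → O, p φ = ∏ e : E, ∑ φ' : E → O, if φ' e = φ e then p φ' else 0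
  f : Sub E O → ℝ
  f_nonneg : ∀ ψ, 0 ≤ f ψ
  f_empty : f (fun _ => none) = 0
  f_mono : ∀ ψ ψ' : Sub E O, subext ψ ψ' → f ψ ≤ f ψ'
  f_submod : ∀ (ψ ψ' : Sub E O) (e : E) (o : O), subext ψ ψ' → ψ' e = none →
      f (updateSub ψ' e o) - f ψ' ≤ f (updateSub ψ e o) - f ψ
  Q : ℝ
  Q_pos : 0 < Q
  f_cover : ∀ φ : E → O, f (toSub φ) = Q

variable (M : Problem E O)

/-- Expectation of a random variable `X` with respect to the random realization `Φ`. -/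
def Ex (X : (E → O) → ℝ) : ℝ := ∑ φ : E → O, M.p φ * X φ

/-- Probability of an event `A` of the random realization `Φ`. -/
def Pr (A : (E → O) → Prop) : ℝ := ∑ φ : E → O, if A φ then M.p φ else 0

/-- Conditional expectation `E[X | A]`. -/
def cEx (X : (E → O) → ℝ) (A : (E → O) → Prop) : ℝ :=
  (∑ φ : E → O, if A φ then M.p φ * X φ else 0) / Pr M A

/-- The random marginal increase in utility `F_ψ(e)` from observing the state of `e`. -/
def Fm (ψ : Sub E O) (e : E) (φ : E → O) : ℝ := M.f (updateSub ψ e (φ e)) - M.f ψ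

/-- The unit price `υ(e|ψ) = c(e) / E[F_ψ(e)]`. -/
def price (ψ : Sub E O) (e : E) : ℝ := M.c e / Ex M (Fm M ψ e)

/-- An adaptive covering policy: at every subrealization `ψ` with `f ψ < Q` it selects an
item outside `dom ψ`. -/
def IsPolicy (π : Sub E O → E) : Prop := ∀ ψ : Sub E O, M.f ψ < M.Q → ψ (π ψ) = none

/-- The `α`-approximate adaptive greedy policy: at every `ψ` with `f ψ < Q` the unit price of
the selected item `σ ψ` is at most `α` times the minimum unit price, i.e.
`υ(σ ψ | ψ) ≤ α · υ(e | ψ)` for every `e ∉ dom ψ`, written multiplicatively so that infinite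
unit prices (zero expected marginal utility) are handled correctly. -/
def IsGreedy (α : ℝ) (σ : Sub E O → E) : Prop :=
  IsPolicy M σ ∧
    ∀ ψ : Sub E O, M.f ψ < M.Q → ∀ e : E, ψ e = none →
      M.c (σ ψ) * Ex M (Fm M ψ e) ≤ α * M.c e * Ex M (Fm M ψ (σ ψ))

/-- One step of executing policy `π` on realization `φ`. -/
def stepPol (π : Sub E O → E) (φ : E → O) (ψ : Sub E O) : Sub E O :=
  if M.f ψ < M.Q then updateSub ψ (π ψ) (φ (π ψ)) else ψ

/-- The subrealization reached after `n` steps of executing `π` on `φ`. -/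
def execAux (π : Sub E O → E) (φ : E → O) : ℕ → Sub E O
  | 0 => fun _ => none
  | n + 1 => stepPol M π φ (execAux π φ n)

/-- The cover `Ψ(π)` constructed by executing `π` on realization `φ`. -/
def cover (π : Sub E O → E) (φ : E → O) : Sub E O := execAux M π φ (Fintype.card E)

/-- `ψ` is visited when executing `π` on realization `φ`. -/
def visits (π : Sub E O → E) (φ : E → O) (ψ : Sub E O) : Prop := ∃ n, execAux M π φ n = ψ

/-- The set `S(π)` of items selected when executing `π` on `φ`. -/
def Ssel (π : Sub E O → E) (φ : E → O) : Finset E :=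
  Finset.univ.filter fun e => cover M π φ e ≠ none

/-- The cost `C(π)` incurred when executing `π` on `φ`. -/
def C (π : Sub E O → E) (φ : E → O) : ℝ := ∑ e ∈ Ssel M π φ, M.c e

/-- An adaptive covering policy of minimum expected cost. -/
def IsOptimal (π : Sub E O → E) : Prop :=
  IsPolicy M π ∧ ∀ π' : Sub E O → E, IsPolicy M π' → Ex M (C M π) ≤ Ex M (C M π')

/-- `N(π)`: the non-leaf nodes of the decision tree of `π` — subrealizations with
`f ψ < Q` that are visited with positive probability. -/
def Nnodes (π : Sub E O → E) : Finset (Sub E O) :=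
  Finset.univ.filter fun ψ => M.f ψ < M.Q ∧ 0 < Pr M fun φ => visits M π φ ψ

/-- The event `ψ ↝ i`, for a marker located at utility value `b = f(ρ_i)`:
`ψ` is the last subrealization visited by `σ` (on the given realization) whose
utility is at most `b`. -/
def leadsTo (σ : Sub E O → E) (b : ℝ) (ψ : Sub E O) (φ : E → O) : Prop :=
  visits M σ φ ψ ∧ M.f ψ ≤ b ∧
    ∀ ψ' : Sub E O, visits M σ φ ψ' → M.f ψ' ≤ b → subext ψ' ψ

/-- The revenue `λ_i = υ_ψ · ε_i` collected by `σ` from the marker located at utility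
value `b = f(ρ_i)` with interval length `εi`, where `ψ` is the unique subrealization
with `ψ ↝ i`. -/
def lam (σ : Sub E O → E) (b εi : ℝ) (φ : E → O) : ℝ :=
  ∑ ψ : Sub E O, if leadsTo M σ b ψ φ then price M ψ (σ ψ) * εi else 0

/-- The revenue `μ(e)` collected by the optimal policy `πs` from item `e`
(relative to the greedy policy `σ`, both executed on the same realization). -/
def mu (σ πs : Sub E O → E) (e : E) (φ : E → O) : ℝ :=
  if e ∈ Ssel M πs φ then
    if e ∈ Ssel M σ φ then
      ∑ ψ : Sub E O,
        if visits M σ φ ψ ∧ M.f ψ < M.Q ∧ σ ψ = e then price M ψ e * Fm M ψ e φ else 0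
    else M.c e
  else 0

/-- The total revenue `μ*` collected by the optimal policy. -/
def muStar (σ πs : Sub E O → E) (φ : E → O) : ℝ := ∑ e : E, mu M σ πs e φ

/-- Replay of the internal state of policy `πs` in the second stage of the hybrid policy:
starting from the empty subrealization, repeatedly query `πs`; an item whose state is
already recorded in `ψ'` is not re-selected, its recorded state being used instead. -/
def replayAux (πs : Sub E O → E) (ψ' : Sub E O) : ℕ → Sub E O
  | 0 => fun _ => none
  | n + 1 =>
    if M.f (replayAux πs ψ' n) < M.Q then
      match ψ' (πs (replayAux πs ψ' n)) with
      | some o => updateSub (replayAux πs ψ' n) (πs (replayAux πs ψ' n)) o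
      | none => replayAux πs ψ' n
    else replayAux πs ψ' n

/-- The hybrid policy `π^ψ0`: follow `σ` until `ψ0` is visited, then switch to executing
`πs` from the root of its tree, never re-selecting an item of `dom ψ0` and using the
state recorded in `ψ0` instead. -/
def hybrid (σ πs : Sub E O → E) (ψ0 : Sub E O) : Sub E O → E := fun ψ' =>
  if subext ψ0 ψ' then πs (replayAux M πs ψ' (Fintype.card E)) else σ ψ'

/-- `δ⁺_ψ0(e)`: the marginal utility obtained by the hybrid policy `π^ψ0` when it selects
`e` during its second stage, and `0` if `e` is not selected in the second stage. -/
def deltaPlus (σ πs : Sub E O → E) (ψ0 : Sub E O) (e : E) (φ : E → O) : ℝ :=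
  ∑ ψ' : Sub E O,
    if subext ψ0 ψ' ∧ visits M (hybrid M σ πs ψ0) φ ψ' ∧
        ssubext ψ' (cover M (hybrid M σ πs ψ0) φ) ∧ hybrid M σ πs ψ0 ψ' = e
    then Fm M ψ' e φ else 0


/-! ### Helper lemmas -/

lemma subext_refl (ψ : Sub E O) : subext ψ ψ := fun _ _ h => h

lemma subext_trans {a b d : Sub E O} (h1 : subext a b) (h2 : subext b d) : subext a d :=
  fun e o h => h2 e o (h1 e o h)

lemma step_ext (π : Sub E O → E) (hπ : IsPolicy M π) (φ : E → O) (ψ : Sub E O) :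
    subext ψ (stepPol M π φ ψ) := by
  intro e o h
  unfold stepPol
  split_ifs with hf
  · unfold updateSub
    have := hπ ψ hf
    by_cases he : e = π ψ
    · subst he; rw [this] at h; cases h
    · simp [he, h]
  · exact h

lemma exec_ext (π : Sub E O → E) (hπ : IsPolicy M π) (φ : E → O) {m n : ℕ} (h : m ≤ n) :
    subext (execAux M π φ m) (execAux M π φ n) := by
  induction n, h using Nat.le_induction with
  | base => exact subext_refl _
  | succ n hn ih => exact subext_trans ih (step_ext M π hπ φ _)

lemma exec_sub (π : Sub E O → E) (φ : E → O) (n : ℕ) :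
    subext (execAux M π φ n) (toSub φ) := by
  induction n with
  | zero => intro e o h; simp [execAux] at h
  | succ n ih =>
    intro e o h
    simp only [execAux, stepPol] at h
    split_ifs at h with hf
    · unfold updateSub at h
      by_cases he : e = π (execAux M π φ n)
      · simp only [he, if_true] at h
        simpa [toSub, he] using h
      · simp only [he, if_false] at h
        exact ih e o h
    · exact ih e o h

lemma exec_succ (π : Sub E O → E) (φ : E → O) (n : ℕ) (h : M.f (execAux M π φ n) < M.Q) :
    execAux M π φ (n+1) = updateSub (execAux M π φ n) (π (execAux M π φ n))
      (φ (π (execAux M π φ n))) := by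
  simp [execAux, stepPol, h]

lemma exec_lt_of_lt (π : Sub E O → E) (hπ : IsPolicy M π) (φ : E → O) {m n : ℕ} (h : m ≤ n)
    (hf : M.f (execAux M π φ n) < M.Q) : M.f (execAux M π φ m) < M.Q :=
  lt_of_le_of_lt (M.f_mono _ _ (exec_ext M π hπ φ h)) hf

lemma exec_card (π : Sub E O → E) (hπ : IsPolicy M π) (φ : E → O) (n : ℕ)
    (hf : M.f (execAux M π φ n) < M.Q) :
    (Finset.univ.filter fun e => execAux M π φ n e ≠ none).card = n := by
  induction n with
  | zero => simp [execAux]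
  | succ n ih =>
    have h1 := exec_lt_of_lt M π hπ φ (Nat.le_succ n) hf
    have h2 := ih h1
    have h3 := hπ _ h1
    have : (Finset.univ.filter fun e => execAux M π φ (n+1) e ≠ none)
        = insert (π (execAux M π φ n)) (Finset.univ.filter fun e => execAux M π φ n e ≠ none) := by
      ext e
      rw [Finset.mem_insert, Finset.mem_filter, Finset.mem_filter, exec_succ M π φ n h1]
      by_cases he : e = π (execAux M π φ n) <;> simp [updateSub, he]
    rw [this, Finset.card_insert_of_notMem, h2]
    simp [h3]

lemma exec_lt_card (π : Sub E O → E) (hπ : IsPolicy M π) (φ : E → O) (n : ℕ)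
    (hf : M.f (execAux M π φ n) < M.Q) : n < Fintype.card E := by
  have h := exec_card M π hπ φ n hf
  have h3 := hπ _ hf
  rw [← h]
  apply Finset.card_lt_univ_of_notMem (x := π (execAux M π φ n))
  simp [h3]

lemma exec_mem (π : Sub E O → E) (φ : E → O) (n : ℕ) (e : E)
    (h : execAux M π φ n e ≠ none) :
    ∃ k, M.f (execAux M π φ k) < M.Q ∧ π (execAux M π φ k) = e := by
  induction n with
  | zero => simp [execAux] at h
  | succ n ih =>
    by_cases hf : M.f (execAux M π φ n) < M.Q
    · by_cases he : e = π (execAux M π φ n)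
      · exact ⟨n, hf, he.symm⟩
      · rw [exec_succ M π φ n hf] at h
        simp only [updateSub, he, if_false] at h
        exact ih h
    · simp only [execAux, stepPol, hf, if_false] at h
      exact ih h

lemma exec_next_some (π : Sub E O → E) (φ : E → O) (n : ℕ)
    (hf : M.f (execAux M π φ n) < M.Q) :
    execAux M π φ (n+1) (π (execAux M π φ n)) = some (φ (π (execAux M π φ n))) := by
  rw [exec_succ M π φ n hf]; simp [updateSub]

lemma exec_inj (π : Sub E O → E) (hπ : IsPolicy M π) (φ : E → O) (m n : ℕ)
    (hn : M.f (execAux M π φ n) < M.Q)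
    (h : π (execAux M π φ m) = π (execAux M π φ n)) : ¬ m < n := by
  intro hmn
  have hm := exec_lt_of_lt M π hπ φ hmn.le hn
  have h1 := exec_ext M π hπ φ (Nat.succ_le_of_lt hmn) _ _ (exec_next_some M π φ m hm)
  rw [h, hπ _ hn] at h1
  cases h1

lemma cost_eq (π : Sub E O → E) (hπ : IsPolicy M π) (φ : E → O) :
    C M π φ = ∑ ψ : Sub E O, if visits M π φ ψ ∧ M.f ψ < M.Q then M.c (π ψ) else 0 := by
  unfold C
  rw [← Finset.sum_filter]
  symm
  refine Finset.sum_bij (fun ψ _ => π ψ) ?_ ?_ ?_ ?_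
  · intro ψ h
    obtain ⟨⟨n, rfl⟩, hf⟩ := (Finset.mem_filter.1 h).2
    have h1 := exec_ext M π hπ φ (Nat.succ_le_of_lt (exec_lt_card M π hπ φ n hf)) _ _
      (exec_next_some M π φ n hf)
    refine Finset.mem_filter.2 ⟨Finset.mem_univ _, ?_⟩
    unfold cover
    rw [h1]; simp
  · intro ψ h ψ' h' he
    obtain ⟨⟨n, rfl⟩, hf⟩ := (Finset.mem_filter.1 h).2
    obtain ⟨⟨m, rfl⟩, hf'⟩ := (Finset.mem_filter.1 h').2
    have h1 := exec_inj M π hπ φ n m hf' he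
    have h2 := exec_inj M π hπ φ m n hf he.symm
    have : n = m := by omega
    rw [this]
  · intro e he
    replace he := (Finset.mem_filter.1 he).2
    obtain ⟨k, hk, hk'⟩ := exec_mem M π φ _ e he
    exact ⟨execAux M π φ k, Finset.mem_filter.2 ⟨Finset.mem_univ _, ⟨k, rfl⟩, hk⟩, hk'⟩
  · intro _ _; rfl

lemma exec_congr (π : Sub E O → E) (hπ : IsPolicy M π) (φ φ' : E → O) (n : ℕ)
    (h : ∀ e, execAux M π φ n e ≠ none → φ' e = φ e) :
    execAux M π φ' n = execAux M π φ n := by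
  induction n with
  | zero => rfl
  | succ n ih =>
    have h1 : execAux M π φ' n = execAux M π φ n := by
      apply ih
      intro e he
      obtain ⟨o, ho⟩ := Option.ne_none_iff_exists'.1 he
      apply h
      rw [exec_ext M π hπ φ (Nat.le_succ n) e o ho]; simp
    by_cases hf : M.f (execAux M π φ n) < M.Q
    · have h2 := h _ (by rw [exec_next_some M π φ n hf]; simp)
      rw [exec_succ M π φ n hf, exec_succ M π φ' n (by rw [h1]; exact hf), h1, h2]
    · simp [execAux, stepPol, hf, h1]

lemma visits_update (π : Sub E O → E) (hπ : IsPolicy M π) (φ : E → O) (ψ : Sub E O) (e : E) (o : O)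
    (he : ψ e = none) : visits M π (Function.update φ e o) ψ ↔ visits M π φ ψ := by
  have key : ∀ (φ : E → O) (o : O), visits M π φ ψ → visits M π (Function.update φ e o) ψ := by
    rintro φ o ⟨n, rfl⟩
    refine ⟨n, exec_congr M π hπ _ _ n ?_⟩
    intro e' he'
    have : e' ≠ e := by rintro rfl; exact he' he
    simp [this]
  refine ⟨fun h => ?_, key φ o⟩
  have := key _ (φ e) h
  simpa using this

/-- marginal distribution of an item -/
def marg (e : E) (o : O) : ℝ := ∑ φ' : E → O, if φ' e = o then M.p φ' else 0

lemma marg_ex (e : E) (h : O → ℝ) : ∑ o, marg M e o * h o = ∑ φ, M.p φ * h (φ e) := by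
  unfold marg
  simp_rw [Finset.sum_mul]
  rw [Finset.sum_comm]
  refine Finset.sum_congr rfl fun φ _ => ?_
  simp [ite_mul]

lemma marg_sum (e : E) : ∑ o, marg M e o = 1 := by
  have := marg_ex M e (fun _ => 1)
  simpa [M.p_sum] using this

lemma p_swap (e : E) (o : O) (φ : E → O) :
    marg M e (φ e) * M.p (Function.update φ e o) = marg M e o * M.p φ := by
  have hp : ∀ φ : E → O, M.p φ = marg M e (φ e) * ∏ e' ∈ Finset.univ.erase e, marg M e' (φ e') := by
    intro φ
    rw [Finset.mul_prod_erase Finset.univ (fun e' => marg M e' (φ e')) (Finset.mem_univ e)]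
    exact M.indep φ
  rw [hp φ, hp (Function.update φ e o)]
  have : ∏ e' ∈ Finset.univ.erase e, marg M e' (Function.update φ e o e')
      = ∏ e' ∈ Finset.univ.erase e, marg M e' (φ e') := by
    refine Finset.prod_congr rfl fun e' he' => ?_
    rw [Function.update_of_ne (Finset.ne_of_mem_erase he')]
  rw [this]
  simp only [Function.update_self]
  ring

lemma indep_ex (e : E) (A : (E → O) → ℝ) (hA : ∀ φ o, A (Function.update φ e o) = A φ)
    (h : O → ℝ) :
    ∑ φ, M.p φ * (A φ * h (φ e)) = (∑ φ, M.p φ * A φ) * ∑ φ, M.p φ * h (φ e) := by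
  have h1 : ∑ φ, M.p φ * (A φ * h (φ e))
      = ∑ x : (E → O) × O, marg M e x.2 * (M.p x.1 * (A x.1 * h (x.1 e))) := by
    rw [Fintype.sum_prod_type]
    refine Finset.sum_congr rfl fun φ _ => ?_
    simp only
    rw [← Finset.sum_mul, marg_sum, one_mul]
  have h2 : (∑ φ, M.p φ * A φ) * ∑ φ, M.p φ * h (φ e)
      = ∑ x : (E → O) × O, marg M e x.2 * (M.p x.1 * (A x.1 * h x.2)) := by
    rw [Fintype.sum_prod_type, ← marg_ex M e h, Finset.sum_mul_sum]
    refine Finset.sum_congr rfl fun φ _ => Finset.sum_congr rfl fun o _ => ?_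
    ring
  rw [h1, h2]
  have hinv : Function.Involutive
      (fun x : (E → O) × O => (Function.update x.1 e x.2, x.1 e)) := by
    rintro ⟨φ, o⟩
    simp
  refine Fintype.sum_bijective _ hinv.bijective _ _ ?_
  rintro ⟨φ, o⟩
  simp only [hA]
  have := p_swap M e o φ
  calc _ = (marg M e o * M.p φ) * (A φ * h (φ e)) := by ring
    _ = _ := by rw [← this]; ring

lemma Fm_nonneg (ψ : Sub E O) (e : E) (he : ψ e = none) (φ : E → O) : 0 ≤ Fm M ψ e φ := by
  unfold Fm
  have : M.f ψ ≤ M.f (updateSub ψ e (φ e)) := by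
    apply M.f_mono
    intro e' o h
    have : e' ≠ e := by rintro rfl; rw [he] at h; cases h
    simp [updateSub, this, h]
  linarith

lemma exFm_ne_zero (α : ℝ) (σ : Sub E O → E) (hσ : IsGreedy M α σ) (ψ : Sub E O)
    (hf : M.f ψ < M.Q) (φ : E → O) (hp : 0 < M.p φ) (hv : visits M σ φ ψ) :
    Ex M (Fm M ψ (σ ψ)) ≠ 0 := by
  intro h0
  have hsub : subext ψ (toSub φ) := by
    obtain ⟨n, rfl⟩ := hv; exact exec_sub M σ φ n
  have hz : ∀ e, ψ e = none → M.f (updateSub ψ e (φ e)) - M.f ψ ≤ 0 := by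
    intro e he
    have h1 := hσ.2 ψ hf e he
    rw [h0, mul_zero] at h1
    have h2 : Ex M (Fm M ψ e) ≤ 0 := by
      by_contra hc
      push Not at hc
      have := mul_pos (M.c_pos (σ ψ)) hc
      linarith
    have h3 : M.p φ * Fm M ψ e φ ≤ Ex M (Fm M ψ e) :=
      Finset.single_le_sum (f := fun φ => M.p φ * Fm M ψ e φ)
        (fun φ _ => mul_nonneg (M.p_nonneg φ) (Fm_nonneg M ψ e he φ)) (Finset.mem_univ φ)
    by_contra hc
    push Not at hc
    have := mul_pos hp hc
    unfold Fm at h3 h2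
    linarith
  have key : ∀ S : Finset E, M.f (fun e => if e ∈ S then some (φ e) else ψ e) ≤ M.f ψ := by
    intro S
    induction S using Finset.induction_on with
    | empty => simp
    | insert e S heS ih =>
      set χ : Sub E O := fun e => if e ∈ S then some (φ e) else ψ e with hχ
      have hu : (fun e' => if e' ∈ insert e S then some (φ e') else ψ e')
          = updateSub χ e (φ e) := by
        funext e'
        by_cases h1 : e' = e
        · simp [updateSub, h1]
        · simp [updateSub, h1, hχ]
      rw [hu]
      cases hψe : ψ e with
      | none =>
        have hx : subext ψ χ := by
          intro e' o h
          have := hsub e' o h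
          simp only [toSub] at this
          simp only [hχ]
          split_ifs
          · exact this
          · exact h
        have := M.f_submod ψ χ e (φ e) hx (by simp [hχ, heS, hψe])
        have := hz e hψe
        linarith
      | some o =>
        have h3 := hsub e o hψe
        have : updateSub χ e (φ e) = χ := by
          funext e'
          by_cases h1 : e' = e
          · subst h1
            simp only [toSub] at h3
            simp [updateSub, hχ, heS, hψe, h3]
          · simp [updateSub, h1]
        rw [this]; exact ih
  have := key Finset.univ
  have hc := M.f_cover φ
  simp only [Finset.mem_univ, if_true] at this
  unfold toSub at hc
  linarith

lemma leadsTo_iff (σ : Sub E O → E) (hσ : IsPolicy M σ) (b : ℝ) (hb : b < M.Q)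
    (ψ : Sub E O) (φ : E → O) :
    leadsTo M σ b ψ φ ↔ (visits M σ φ ψ ∧ M.f ψ < M.Q) ∧
      M.f ψ ≤ b ∧ b < M.f (updateSub ψ (σ ψ) (φ (σ ψ))) := by
  constructor
  · rintro ⟨⟨n, rfl⟩, h2, h3⟩
    have hf := lt_of_le_of_lt h2 hb
    refine ⟨⟨⟨n, rfl⟩, hf⟩, h2, ?_⟩
    rw [← exec_succ M σ φ n hf]
    by_contra hc
    push Not at hc
    have := h3 _ ⟨n+1, rfl⟩ hc _ _ (exec_next_some M σ φ n hf)
    rw [hσ _ hf] at this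
    cases this
  · rintro ⟨⟨⟨n, rfl⟩, hf⟩, h2, h3⟩
    refine ⟨⟨n, rfl⟩, h2, ?_⟩
    rintro _ ⟨m, rfl⟩ hm
    rw [← exec_succ M σ φ n hf] at h3
    apply exec_ext M σ hσ
    by_contra hc
    have := M.f_mono _ _ (exec_ext M σ hσ φ (show n + 1 ≤ m by omega))
    linarith

lemma telescope (t : ℕ) (g : ℕ → ℝ) (hg : ∀ i j, 1 ≤ i → i ≤ j → j ≤ t + 1 → g i ≤ g j)
    (j k : ℕ) (hj : 1 ≤ j) (hjt : j ≤ t + 1) (hk : 1 ≤ k) (hkt : k ≤ t + 1) (hjk : g j ≤ g k) :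
    ∑ i ∈ Finset.Icc 1 t, (if g j ≤ g i ∧ g i < g k then g (i+1) - g i else 0) = g k - g j := by
  have h1 : ∀ i ∈ Finset.Icc 1 t, (if g j ≤ g i ∧ g i < g k then g (i+1) - g i else 0)
      = max (g j) (min (g (i+1)) (g k)) - max (g j) (min (g i) (g k)) := by
    intro i hi
    obtain ⟨hi1, hi2⟩ := Finset.mem_Icc.1 hi
    have hs := hg i (i+1) hi1 (by omega) (by omega)
    split_ifs with hc
    · have : g (i+1) ≤ g k := by
        apply hg _ _ (by omega) _ hkt
        by_contra hlt
        have := hg k i hk (by omega) (by omega)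
        linarith [hc.2]
      rw [min_eq_left this, min_eq_left hc.2.le, max_eq_right hc.1, max_eq_right (hc.1.trans hs)]
    · rcases lt_or_ge (g i) (g j) with h | h
      · have : g (i+1) ≤ g j := by
          apply hg _ _ (by omega) _ hjt
          by_contra hlt
          have := hg j i hj (by omega) (by omega)
          linarith
        rw [min_eq_left (this.trans hjk), min_eq_left (h.le.trans hjk), max_eq_left this,
          max_eq_left h.le, sub_self]
      · have h' : g k ≤ g i := by
          by_contra h'
          exact hc ⟨h, not_le.1 h'⟩
        rw [min_eq_right h', min_eq_right (h'.trans hs), sub_self]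
  rw [Finset.sum_congr rfl h1]
  have h2 : ∀ n, ∑ i ∈ Finset.Icc 1 n,
      (max (g j) (min (g (i+1)) (g k)) - max (g j) (min (g i) (g k)))
      = max (g j) (min (g (n+1)) (g k)) - max (g j) (min (g 1) (g k)) := by
    intro n
    induction n with
    | zero => simp
    | succ n ih =>
      rw [Finset.sum_Icc_succ_top (by omega), ih]; ring
  rw [h2]
  have h3 := hg k (t+1) hk hkt le_rfl
  have h4 := hg 1 j le_rfl hj hjt
  rw [min_eq_right h3, max_eq_right hjk, min_eq_left (h4.trans hjk), max_eq_left h4]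

lemma f_le_Q [Nonempty O] (ψ : Sub E O) : M.f ψ ≤ M.Q := by
  rw [← M.f_cover (fun e => (ψ e).getD (Classical.arbitrary O))]
  apply M.f_mono
  intro e o h
  simp [toSub, h]

lemma node_mem (σ : Sub E O → E) (ψ : Sub E O) (φ : E → O) (hp : 0 < M.p φ)
    (hv : visits M σ φ ψ) (hf : M.f ψ < M.Q) : ψ ∈ Nnodes M σ := by
  refine Finset.mem_filter.2 ⟨Finset.mem_univ _, hf, ?_⟩
  unfold Pr
  refine lt_of_lt_of_le hp ?_
  have := Finset.single_le_sum (f := fun φ => if visits M σ φ ψ then M.p φ else 0)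
    (fun φ _ => by split_ifs; exacts [M.p_nonneg φ, le_rfl]) (Finset.mem_univ φ)
  simpa [hv] using this

/-- The expected cost of the adaptive greedy policy equals the total
expected revenue it collects from the markers: `E[C(σ)] = ∑_{i=1}^{|N(σ)|} E[λ_i]`,
where `ρ` enumerates `N(σ)` in non-decreasing order of utility and
`λ_i = lam M σ (f (ρ i)) (ε i)`. -/
theorem greedy_cost_eq_marker_revenue
    (M : Problem E O) (α : ℝ) (hα : 1 ≤ α)
    (σ : Sub E O → E) (hσ : IsGreedy M α σ)
    (t : ℕ) (ρ : ℕ → Sub E O)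
    (hcard : t = (Nnodes M σ).card)
    (hρmem : ∀ i, 1 ≤ i → i ≤ t → ρ i ∈ Nnodes M σ)
    (hρinj : ∀ i j, 1 ≤ i → i ≤ t → 1 ≤ j → j ≤ t → ρ i = ρ j → i = j)
    (hρmono : ∀ i j, 1 ≤ i → i ≤ j → j ≤ t → M.f (ρ i) ≤ M.f (ρ j))
    (ε : ℕ → ℝ)
    (hε : ∀ i, 1 ≤ i → i < t → ε i = M.f (ρ (i + 1)) - M.f (ρ i))
    (hεt : 1 ≤ t → ε t = M.Q - M.f (ρ t)) :
    Ex M (C M σ) = ∑ i ∈ Finset.Icc 1 t, Ex M (lam M σ (M.f (ρ i)) (ε i)) := by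
  classical
  have hpol := hσ.1
  -- surjectivity of the enumeration
  have hsurj : ∀ ψ ∈ Nnodes M σ, ∃ i, 1 ≤ i ∧ i ≤ t ∧ ρ i = ψ := by
    have himg : (Finset.Icc 1 t).image ρ = Nnodes M σ := by
      apply Finset.eq_of_subset_of_card_le
      · intro x hx
        obtain ⟨i, hi, rfl⟩ := Finset.mem_image.1 hx
        exact hρmem i (Finset.mem_Icc.1 hi).1 (Finset.mem_Icc.1 hi).2
      · rw [Finset.card_image_of_injOn, Nat.card_Icc, ← hcard]
        · simp
        · intro i hi j hj hij
          have hi := Finset.mem_Icc.1 (Finset.mem_coe.1 hi)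
          have hj := Finset.mem_Icc.1 (Finset.mem_coe.1 hj)
          exact hρinj i j hi.1 hi.2 hj.1 hj.2 hij
    intro ψ hψ
    rw [← himg] at hψ
    obtain ⟨i, hi, h⟩ := Finset.mem_image.1 hψ
    exact ⟨i, (Finset.mem_Icc.1 hi).1, (Finset.mem_Icc.1 hi).2, h⟩
  have hltQ : ∀ i, 1 ≤ i → i ≤ t → M.f (ρ i) < M.Q := fun i h1 h2 =>
    (Finset.mem_filter.1 (hρmem i h1 h2)).2.1
  obtain ⟨g, hgdef⟩ : ∃ g : ℕ → ℝ, g = fun i => if i ≤ t then M.f (ρ i) else M.Q := ⟨_, rfl⟩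
  have hgi : ∀ i, i ≤ t → g i = M.f (ρ i) := fun i hi => by simp [hgdef, hi]
  have hgt : g (t+1) = M.Q := by simp [hgdef]
  have hgmono : ∀ i j, 1 ≤ i → i ≤ j → j ≤ t + 1 → g i ≤ g j := by
    intro i j h1 h2 h3
    rcases Nat.lt_or_ge t j with h | h
    · have : j = t + 1 := by omega
      subst this
      rw [hgt]
      rcases Nat.lt_or_ge t i with h' | h'
      · have : i = t + 1 := by omega
        rw [this, hgt]
      · rw [hgi i h']; exact (hltQ i h1 h').le
    · rw [hgi j h, hgi i (h2.trans h)]; exact hρmono i j h1 h2 h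
  have hεg : ∀ i, 1 ≤ i → i ≤ t → ε i = g (i+1) - g i := by
    intro i h1 h2
    rw [hgi i h2]
    rcases Nat.lt_or_ge i t with h | h
    · rw [hgi (i+1) h]; exact hε i h1 h
    · have : i = t := by omega
      subst this
      rw [hgt]; exact hεt h1
  -- pathwise identity
  have hpath : ∀ φ, 0 < M.p φ →
      ∑ i ∈ Finset.Icc 1 t, lam M σ (M.f (ρ i)) (ε i) φ
      = ∑ ψ : Sub E O, if visits M σ φ ψ ∧ M.f ψ < M.Q then
          price M ψ (σ ψ) * Fm M ψ (σ ψ) φ else 0 := by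
    intro φ hp
    unfold lam
    rw [Finset.sum_comm]
    refine Finset.sum_congr rfl fun ψ _ => ?_
    have hstep : ∀ i ∈ Finset.Icc 1 t,
        (if leadsTo M σ (M.f (ρ i)) ψ φ then price M ψ (σ ψ) * ε i else 0)
        = if visits M σ φ ψ ∧ M.f ψ < M.Q then price M ψ (σ ψ) *
          (if M.f ψ ≤ g i ∧ g i < M.f (updateSub ψ (σ ψ) (φ (σ ψ))) then g (i+1) - g i else 0)
          else 0 := by
      intro i hi
      obtain ⟨h1, h2⟩ := Finset.mem_Icc.1 hi
      have hl := leadsTo_iff M σ hpol (M.f (ρ i)) (hltQ i h1 h2) ψ φ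
      rw [← hgi i h2] at hl ⊢
      rw [hεg i h1 h2]
      by_cases hA : visits M σ φ ψ ∧ M.f ψ < M.Q <;>
      by_cases hB : M.f ψ ≤ g i ∧ g i < M.f (updateSub ψ (σ ψ) (φ (σ ψ)))
      · rw [if_pos (hl.2 ⟨hA, hB⟩), if_pos hA, if_pos hB]
      · rw [if_neg (fun h => hB (hl.1 h).2), if_pos hA, if_neg hB, mul_zero]
      · rw [if_neg (fun h => hA (hl.1 h).1), if_neg hA]
      · rw [if_neg (fun h => hA (hl.1 h).1), if_neg hA]
    rw [Finset.sum_congr rfl hstep]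
    by_cases hA : visits M σ φ ψ ∧ M.f ψ < M.Q
    · simp only [if_pos hA]
      rw [← Finset.mul_sum]
      congr 1
      obtain ⟨j, hj1, hj2, hj⟩ := hsurj ψ (node_mem M σ ψ φ hp hA.1 hA.2)
      have hgj : g j = M.f ψ := by rw [hgi j hj2, hj]
      have hv' : visits M σ φ (updateSub ψ (σ ψ) (φ (σ ψ))) := by
        obtain ⟨n, hn⟩ := hA.1
        refine ⟨n+1, ?_⟩
        have := exec_succ M σ φ n (by rw [hn]; exact hA.2)
        rw [this, hn]
      have hnn := Fm_nonneg M ψ (σ ψ) (hpol ψ hA.2) φ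
      unfold Fm at hnn ⊢
      haveI : Nonempty O := ⟨φ (σ ψ)⟩
      obtain ⟨k, hk1, hk2, hk⟩ : ∃ k, 1 ≤ k ∧ k ≤ t + 1 ∧
          g k = M.f (updateSub ψ (σ ψ) (φ (σ ψ))) := by
        rcases lt_or_ge (M.f (updateSub ψ (σ ψ) (φ (σ ψ)))) M.Q with h | h
        · obtain ⟨k, hk1, hk2, hk⟩ := hsurj _ (node_mem M σ _ φ hp hv' h)
          exact ⟨k, hk1, by omega, by rw [hgi k hk2, hk]⟩
        · exact ⟨t+1, by omega, le_rfl, by rw [hgt]; exact le_antisymm h (f_le_Q M _)⟩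
      have := telescope t g hgmono j k hj1 (by omega) hk1 hk2 (by rw [hgj, hk]; linarith)
      rw [hgj, hk] at this
      exact this
    · simp only [if_neg hA, Finset.sum_const_zero]
  -- swap sums
  have hL : Ex M (C M σ) = ∑ ψ : Sub E O, ∑ φ : E → O,
      M.p φ * (if visits M σ φ ψ ∧ M.f ψ < M.Q then M.c (σ ψ) else 0) := by
    unfold Ex
    rw [Finset.sum_comm]
    refine Finset.sum_congr rfl fun φ _ => ?_
    rw [cost_eq M σ hpol φ, Finset.mul_sum]
  have hR : ∑ i ∈ Finset.Icc 1 t, Ex M (lam M σ (M.f (ρ i)) (ε i))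
      = ∑ ψ : Sub E O, ∑ φ : E → O, M.p φ * (if visits M σ φ ψ ∧ M.f ψ < M.Q then
          price M ψ (σ ψ) * Fm M ψ (σ ψ) φ else 0) := by
    unfold Ex
    rw [Finset.sum_comm]
    conv_rhs => rw [Finset.sum_comm]
    refine Finset.sum_congr rfl fun φ _ => ?_
    rw [← Finset.mul_sum, ← Finset.mul_sum]
    rcases (M.p_nonneg φ).eq_or_lt with h | h
    · rw [← h, zero_mul, zero_mul]
    · rw [hpath φ h]
  rw [hL, hR]
  refine Finset.sum_congr rfl fun ψ _ => ?_
  by_cases hf : M.f ψ < M.Q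
  · by_cases hex : ∃ φ, 0 < M.p φ ∧ visits M σ φ ψ
    · obtain ⟨φ₀, hp₀, hv₀⟩ := hex
      have hne := exFm_ne_zero M α σ hσ ψ hf φ₀ hp₀ hv₀
      have hI := indep_ex M (σ ψ) (fun φ => if visits M σ φ ψ then (1:ℝ) else 0)
        (fun φ o => by
          have := visits_update M σ hpol φ ψ (σ ψ) o (hpol ψ hf)
          by_cases h : visits M σ φ ψ
          · rw [if_pos h, if_pos (this.2 h)]
          · rw [if_neg h, if_neg (fun h' => h (this.1 h'))])
        (fun o => M.f (updateSub ψ (σ ψ) o) - M.f ψ)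
      have e1 : ∑ φ : E → O, M.p φ * (if visits M σ φ ψ ∧ M.f ψ < M.Q then
          price M ψ (σ ψ) * Fm M ψ (σ ψ) φ else 0) = price M ψ (σ ψ) *
          ∑ φ, M.p φ * ((if visits M σ φ ψ then (1:ℝ) else 0) *
            (M.f (updateSub ψ (σ ψ) (φ (σ ψ))) - M.f ψ)) := by
        rw [Finset.mul_sum]
        refine Finset.sum_congr rfl fun φ _ => ?_
        by_cases h : visits M σ φ ψ
        · rw [if_pos ⟨h, hf⟩, if_pos h, Fm]; ring
        · rw [if_neg (fun h' => h h'.1), if_neg h]; ring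
      have e2 : ∑ φ : E → O, M.p φ * (if visits M σ φ ψ ∧ M.f ψ < M.Q then M.c (σ ψ) else 0)
          = M.c (σ ψ) * ∑ φ, M.p φ * (if visits M σ φ ψ then (1:ℝ) else 0) := by
        rw [Finset.mul_sum]
        refine Finset.sum_congr rfl fun φ _ => ?_
        by_cases h : visits M σ φ ψ
        · rw [if_pos ⟨h, hf⟩, if_pos h]; ring
        · rw [if_neg (fun h' => h h'.1), if_neg h]; ring
      have e3 : ∑ φ, M.p φ * (M.f (updateSub ψ (σ ψ) (φ (σ ψ))) - M.f ψ)
          = Ex M (Fm M ψ (σ ψ)) := rfl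
      rw [e1, e2, hI, e3, price]
      field_simp
    · refine Finset.sum_congr rfl fun φ _ => ?_
      rcases (M.p_nonneg φ).eq_or_lt with h | h
      · rw [← h, zero_mul, zero_mul]
      · have : ¬ visits M σ φ ψ := fun hv => hex ⟨φ, h, hv⟩
        simp [this]
  · simp [hf]


end
end SSC
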